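/- arXiv:2201.04856 — 3 statements merged into one kernel-verified Lean document; each statement's English description precedes it below -/
import Mathlib

section
/- For every n ≥ 3, every line of the Böröczky arrangement B_n contains at least ⌊(n−3)/2⌋ points of T_n, and there exists at least one line of B_n containing at least ⌊(n−3)/2⌋ + 1 points of T_n. -/
/-!
With `a = kπ/n`, the `k`-th line has coefficient vector `(sin a, cos a, -sin 3a)`, and the
determinant of three such vectors is
`4 sin(a-b) sin(b-c) sin(a-c) sin(a+b+c)` (`boroczky_det`).  Hence, for distinct indices
`i, j, k < n`, the three lines are distinct and they are concurrent exactly when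
`n ∣ i + j + k` (`exists_incid_iff`).

Consequently every `j` with `j ≠ i`, `n ∤ 2i + j`, `n ∤ i + 2j` (`goodIdx`) gives a triple point
on the `i`-th line, namely its intersection with the `j`-th line, and each triple point arises
from at most two such `j` (`card_goodIdx_le`).  At most three (`n` odd) or four (`n` even)
indices `j` are excluded, which gives `⌊(n-3)/2⌋` triple points on each line.  For `i = 0` only
`j = 0` and, when `n` is even, `j = n/2` are excluded, which gives one more triple point.
-/


open scoped Classical

noncomputable section

/-- The projective plane `ℙ²(ℂ)`, used both for points and for lines
(a line being recorded by its coefficient vector, up to scalar). -/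
abbrev P2 := Projectivization ℂ (Fin 3 → ℂ)

lemma vne₀ {a b c : ℂ} (h : a ≠ 0) : ![a, b, c] ≠ 0 :=
  fun hh => h (by simpa using congrFun hh 0)

lemma vne₁ {a b c : ℂ} (h : b ≠ 0) : ![a, b, c] ≠ 0 :=
  fun hh => h (by simpa using congrFun hh 1)

lemma vne₂ {a b c : ℂ} (h : c ≠ 0) : ![a, b, c] ≠ 0 :=
  fun hh => h (by simpa using congrFun hh 2)

/-- The point (or line) of `ℙ²(ℂ)` with homogeneous coordinates `[a : b : c]`. -/
def mkP (a b c : ℂ) (h : ![a, b, c] ≠ 0) : P2 := Projectivization.mk ℂ ![a, b, c] h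

/-- Incidence: the point `p` lies on the line `L`
(the line being given by its coefficient vector, up to scalar). -/
def Incid (p L : P2) : Prop := ∑ i : Fin 3, p.rep i * L.rep i = 0

/-- The multiplicity of a point `p` with respect to the line arrangement `A`:
the number of lines of `A` passing through `p`. -/
def mult (A : Finset P2) (p : P2) : ℕ := (A.filter fun L => Incid p L).card

/-- `p` is a singular point of the arrangement `A`: it lies on at least two of its lines. -/
def IsSing (A : Finset P2) (p : P2) : Prop := 2 ≤ mult A p

/-- The set of singular points of `A`. -/
def Sing (A : Finset P2) : Set P2 := {p | IsSing A p}

/-- `tr A r` is the number of singular points of `A` of multiplicity exactly `r`. -/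
def tr (A : Finset P2) (r : ℕ) : ℕ := {p : P2 | mult A p = r}.ncard

/-- `P` is a modular point of `A`: it is a singular point, and for every singular point
`Q ≠ P` the line through `P` and `Q` belongs to `A`. -/
def IsModular (A : Finset P2) (P : P2) : Prop :=
  IsSing A P ∧ ∀ Q : P2, IsSing A Q → Q ≠ P → ∃ L ∈ A, Incid P L ∧ Incid Q L

/-- A line arrangement in `ℙ²(ℂ)` is supersolvable iff it has a modular point. -/
def Supersolvable (A : Finset P2) : Prop := ∃ P : P2, IsModular A P

/-- The extension-to-supersolvability number: the least `k` such that `A` is contained in a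
supersolvable arrangement with `|A| + k` lines. -/
def extSS (A : Finset P2) : ℕ :=
  sInf {k : ℕ | ∃ B : Finset P2, A ⊆ B ∧ Supersolvable B ∧ B.card = A.card + k}

lemma cs_ne_zero (t : ℝ) (c : ℂ) : ![(Real.cos t : ℂ), (Real.sin t : ℂ), c] ≠ 0 := by
  intro h
  have h0 : (Real.cos t : ℂ) = 0 := by simpa using congrFun h 0
  have h1 : (Real.sin t : ℂ) = 0 := by simpa using congrFun h 1
  have hc : Real.cos t = 0 := by exact_mod_cast h0
  have hs : Real.sin t = 0 := by exact_mod_cast h1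
  have h2 := Real.sin_sq_add_cos_sq t
  rw [hs, hc] at h2
  norm_num at h2

/-- The `k`-th line of the Böröczky arrangement of `n` lines.  Writing `α = 2kπ/n`, it is the
line through the unit-circle points `Q_α` and `Q_{π-2α}` (in the degenerate case
`α ≡ π-2α (mod 2π)` it is the tangent line to the circle at `Q_α`); in all cases it has the
equation `cos((π-α)/2)·x + sin((π-α)/2)·y - cos((3α-π)/2)·z = 0`. -/
def boroczkyLine (n k : ℕ) : P2 :=
  mkP ((Real.cos ((Real.pi - 2 * k * Real.pi / n) / 2) : ℂ))
      ((Real.sin ((Real.pi - 2 * k * Real.pi / n) / 2) : ℂ))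
      (-((Real.cos ((3 * (2 * k * Real.pi / n) - Real.pi) / 2) : ℂ)))
      (cs_ne_zero _ _)

/-- The Böröczky arrangement `B_n` of `n` lines. -/
def Boroczky (n : ℕ) : Finset P2 := (Finset.range n).image (boroczkyLine n)

/-- `T_n`, the set of triple points of `B_n`. -/
def Tn (n : ℕ) : Set P2 := {p : P2 | mult (Boroczky n) p = 3}

/-! ### Concurrency of lines of `B_n` -/

lemma incid_iff_orthogonal (p L : P2) : Incid p L ↔ p.orthogonal L := by
  conv_rhs => rw [← p.mk_rep, ← L.mk_rep]
  rw [Projectivization.orthogonal_mk]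
  rfl

/-- Two distinct lines meet in at most one point. -/
lemma eq_of_incid {p q L M : P2} (hLM : L ≠ M) (hp : Incid p L) (hp' : Incid p M)
    (hq : Incid q L) (hq' : Incid q M) : p = q := by
  rw [incid_iff_orthogonal] at *
  exact (Configuration.ofField.eq_or_eq_of_orthogonal hp hq hp' hq').resolve_right hLM

/-- A coefficient vector of the `k`-th line of `B_n`, in terms of the half-angle `a = kπ/n`. -/
def lineVec (a : ℝ) : Fin 3 → ℂ :=
  ![(Real.sin a : ℂ), (Real.cos a : ℂ), -(Real.sin (3 * a) : ℂ)]

lemma lineVec_ne_zero (a : ℝ) : lineVec a ≠ 0 := by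
  intro h
  have h0 : (Real.sin a : ℂ) = 0 := congrFun h 0
  have h1 : (Real.cos a : ℂ) = 0 := congrFun h 1
  have hs : Real.sin a = 0 := by exact_mod_cast h0
  have hc : Real.cos a = 0 := by exact_mod_cast h1
  have h2 := Real.sin_sq_add_cos_sq a
  rw [hs, hc] at h2
  norm_num at h2

lemma boroczkyLine_eq (n k : ℕ) :
    boroczkyLine n k =
      Projectivization.mk ℂ (lineVec (k * Real.pi / n)) (lineVec_ne_zero _) := by
  have e1 : (Real.pi - 2 * k * Real.pi / n) / 2 = Real.pi / 2 - k * Real.pi / n := by ring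
  have e2 : (3 * (2 * k * Real.pi / n) - Real.pi) / 2
      = 3 * (k * Real.pi / n) - Real.pi / 2 := by ring
  unfold boroczkyLine mkP
  congr 1
  rw [e1, e2, Real.cos_pi_div_two_sub, Real.sin_pi_div_two_sub, Real.cos_sub_pi_div_two]
  rfl

lemma incid_mk_boroczkyLine (n k : ℕ) (v : Fin 3 → ℂ) (hv : v ≠ 0) :
    Incid (Projectivization.mk ℂ v hv) (boroczkyLine n k) ↔
      lineVec (k * Real.pi / n) ⬝ᵥ v = 0 := by
  rw [incid_iff_orthogonal, boroczkyLine_eq, Projectivization.orthogonal_mk, dotProduct_comm]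

/-- The factorization of the determinant that governs concurrency of three lines of `B_n`. -/
lemma boroczky_det (a b c : ℝ) :
    (Matrix.of ![lineVec a, lineVec b, lineVec c]).det =
      ((4 * Real.sin (a - b) * Real.sin (b - c) * Real.sin (a - c) * Real.sin (a + b + c) : ℝ)
        : ℂ) := by
  -- Writing `sin`, `cos` and `sin ∘ (3 * ·)` as cubic forms in `sin`, `cos` makes the identity
  -- homogeneous of degree three in each variable, hence a polynomial identity.
  have hs : ∀ x : ℝ, Real.sin x = Real.sin x * (Real.sin x ^ 2 + Real.cos x ^ 2) := fun x => by
    rw [Real.sin_sq_add_cos_sq, mul_one]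
  have hc : ∀ x : ℝ, Real.cos x = Real.cos x * (Real.sin x ^ 2 + Real.cos x ^ 2) := fun x => by
    rw [Real.sin_sq_add_cos_sq, mul_one]
  have h3 : ∀ x : ℝ, Real.sin (3 * x) = 3 * Real.sin x * Real.cos x ^ 2 - Real.sin x ^ 3 :=
    fun x => by rw [Real.sin_three_mul, Real.cos_sq']; ring
  have key : Real.sin a * (Real.cos b * -Real.sin (3 * c) - -Real.sin (3 * b) * Real.cos c)
      - Real.cos a * (Real.sin b * -Real.sin (3 * c) - -Real.sin (3 * b) * Real.sin c)
      + -Real.sin (3 * a) * (Real.sin b * Real.cos c - Real.cos b * Real.sin c)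
      = 4 * Real.sin (a - b) * Real.sin (b - c) * Real.sin (a - c) * Real.sin (a + b + c) := by
    simp only [h3, Real.sin_sub, Real.sin_add, Real.cos_add]
    generalize hsa : Real.sin a = sa
    generalize hca : Real.cos a = ca
    generalize hsb : Real.sin b = sb
    generalize hcb : Real.cos b = cb
    generalize hsc : Real.sin c = sc
    generalize hcc : Real.cos c = cc
    have sa' := hs a
    have ca' := hc a
    have sb' := hs b
    have cb' := hc b
    have sc' := hs c
    have cc' := hc c
    rw [hsa, hca] at sa' ca'
    rw [hsb, hcb] at sb' cb'
    rw [hsc, hcc] at sc' cc'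
    have tri : ∀ u v w x y z r s t u' v' w' x' y' z' : ℝ, u = u' → v = v' → w = w' → x = x' →
        y = y' → z = z' →
        u * (x * -t - -s * z) - v * (w * -t - -s * y) + -r * (w * z - x * y) =
        u' * (x' * -t - -s * z') - v' * (w' * -t - -s * y') + -r * (w' * z' - x' * y') := by
      rintro u v w x y z r s t _ _ _ _ _ _ rfl rfl rfl rfl rfl rfl
      rfl
    rw [tri _ _ _ _ _ _ _ _ _ _ _ _ _ _ _ sa' ca' sb' cb' sc' cc']
    ring
  rw [← key, Matrix.det_fin_three]
  simp only [lineVec, Matrix.of_apply, Matrix.cons_val]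
  push_cast
  ring

/-- `sin (kπ/n)` vanishes exactly when `n ∣ k`. -/
lemma sin_eq_zero_iff_dvd {n : ℕ} (hn : 0 < n) (k : ℤ) :
    Real.sin (k * Real.pi / n) = 0 ↔ (n : ℤ) ∣ k := by
  have hn' : (n : ℝ) ≠ 0 := by positivity
  rw [Real.sin_eq_zero_iff]
  constructor
  · rintro ⟨m, hm⟩
    rw [eq_div_iff hn'] at hm
    have h : ((m * n : ℤ) : ℝ) = k := by
      push_cast
      apply mul_right_cancel₀ Real.pi_ne_zero
      linarith
    exact ⟨m, by rw [mul_comm]; exact_mod_cast h.symm⟩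
  · rintro ⟨m, rfl⟩
    refine ⟨m, ?_⟩
    push_cast
    field_simp

lemma sin_sub_ne_zero {n i j : ℕ} (hi : i < n) (hj : j < n) (hij : i ≠ j) :
    Real.sin (i * Real.pi / n - j * Real.pi / n) ≠ 0 := by
  have e : (i * Real.pi / n - j * Real.pi / n : ℝ) = ((i - j : ℤ) : ℝ) * Real.pi / n := by
    push_cast
    ring
  rw [e, Ne, sin_eq_zero_iff_dvd (by omega)]
  intro h
  have := Int.eq_zero_of_abs_lt_dvd h (by rw [abs_lt]; omega)
  omega

lemma boroczkyLine_injOn {n i j : ℕ} (hi : i < n) (hj : j < n)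
    (h : boroczkyLine n i = boroczkyLine n j) : i = j := by
  by_contra hij
  apply sin_sub_ne_zero hi hj hij
  rw [boroczkyLine_eq, boroczkyLine_eq, Projectivization.mk_eq_mk_iff_crossProduct_eq_zero] at h
  have h2 := congrFun h 2
  simp only [cross_apply, lineVec, Matrix.cons_val, Pi.zero_apply] at h2
  rw [Real.sin_sub]
  exact_mod_cast h2

lemma exists_incid_iff_det (n i j k : ℕ) :
    (∃ p, Incid p (boroczkyLine n i) ∧ Incid p (boroczkyLine n j) ∧
      Incid p (boroczkyLine n k)) ↔
    (Matrix.of ![lineVec (i * Real.pi / n), lineVec (j * Real.pi / n),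
      lineVec (k * Real.pi / n)]).det = 0 := by
  rw [← Matrix.exists_mulVec_eq_zero_iff]
  constructor
  · rintro ⟨p, h1, h2, h3⟩
    refine ⟨p.rep, p.rep_nonzero, ?_⟩
    rw [← p.mk_rep, incid_mk_boroczkyLine] at h1 h2 h3
    ext r
    fin_cases r
    exacts [h1, h2, h3]
  · rintro ⟨v, hv, h⟩
    refine ⟨Projectivization.mk ℂ v hv, ?_⟩
    simp only [incid_mk_boroczkyLine]
    exact ⟨congrFun h 0, congrFun h 1, congrFun h 2⟩

lemma exists_incid_iff {n i j k : ℕ} (hi : i < n) (hj : j < n) (hk : k < n)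
    (hij : i ≠ j) (hjk : j ≠ k) (hik : i ≠ k) :
    (∃ p, Incid p (boroczkyLine n i) ∧ Incid p (boroczkyLine n j) ∧
      Incid p (boroczkyLine n k)) ↔ n ∣ i + j + k := by
  rw [exists_incid_iff_det, boroczky_det, Complex.ofReal_eq_zero]
  have e : (i * Real.pi / n + j * Real.pi / n + k * Real.pi / n : ℝ)
      = ((i + j + k : ℕ) : ℤ) * Real.pi / n := by
    push_cast
    ring
  rw [mul_eq_zero, or_iff_right, e, sin_eq_zero_iff_dvd (by omega), Int.natCast_dvd_natCast]
  exact mul_ne_zero (mul_ne_zero (mul_ne_zero (by norm_num) (sin_sub_ne_zero hi hj hij))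
    (sin_sub_ne_zero hj hk hjk)) (sin_sub_ne_zero hi hk hik)

/-! ### Triple points on a fixed line -/

/-- The indices `j` for which the `i`-th and `j`-th lines of `B_n` meet in a triple point: `j`,
`i` and the index congruent to `-i-j` modulo `n` are pairwise distinct. -/
def goodIdx (n i : ℕ) : Finset ℕ :=
  (Finset.range n).filter fun j => j ≠ i ∧ ¬ n ∣ 2 * i + j ∧ ¬ n ∣ i + 2 * j

lemma boroczkyLine_mem {n k : ℕ} (hk : k < n) : boroczkyLine n k ∈ Boroczky n :=
  Finset.mem_image_of_mem _ (Finset.mem_range.2 hk)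

lemma exists_triple_point {n i j : ℕ} (hi : i < n) (hj : j ∈ goodIdx n i) :
    ∃ p ∈ Tn n, Incid p (boroczkyLine n i) ∧ Incid p (boroczkyLine n j) := by
  simp only [goodIdx, Finset.mem_filter, Finset.mem_range] at hj
  obtain ⟨hj, hji, h1, h2⟩ := hj
  obtain ⟨k, hk, hd⟩ : ∃ k < n, n ∣ i + j + k := by
    refine ⟨(2 * n - i - j) % n, Nat.mod_lt _ (by omega), ?_⟩
    rw [Nat.dvd_iff_mod_eq_zero, Nat.add_mod_mod, show i + j + (2 * n - i - j) = 2 * n by omega,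
      Nat.mul_mod_left]
  have hik : i ≠ k := by
    rintro rfl
    exact h1 (by convert hd using 1; ring)
  have hjk : j ≠ k := by
    rintro rfl
    exact h2 (by convert hd using 1; ring)
  obtain ⟨p, hpi, hpj, hpk⟩ := (exists_incid_iff hi hj hk hji.symm hjk hik).2 hd
  refine ⟨p, ?_, hpi, hpj⟩
  have hf : ((Boroczky n).filter fun L => Incid p L) =
      {boroczkyLine n i, boroczkyLine n j, boroczkyLine n k} := by
    ext L
    simp only [Finset.mem_filter, Finset.mem_insert, Finset.mem_singleton]
    constructor
    · rintro ⟨hL, hpL⟩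
      obtain ⟨m, hm, rfl⟩ := Finset.mem_image.1 hL
      rw [Finset.mem_range] at hm
      by_cases hmi : m = i
      · simp [hmi]
      by_cases hmj : m = j
      · simp [hmj]
      have hd' := (exists_incid_iff hi hj hm hji.symm (Ne.symm hmj) (Ne.symm hmi)).1
        ⟨p, hpi, hpj, hpL⟩
      have hmk : m = k := by
        have h3 : i + j + m ≡ i + j + k [MOD n] :=
          ((Nat.modEq_zero_iff_dvd).2 hd').trans ((Nat.modEq_zero_iff_dvd).2 hd).symm
        exact (Nat.ModEq.add_left_cancel' _ h3).eq_of_lt_of_lt hm hk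
      simp [hmk]
    · rintro (rfl | rfl | rfl)
      exacts [⟨boroczkyLine_mem hi, hpi⟩, ⟨boroczkyLine_mem hj, hpj⟩, ⟨boroczkyLine_mem hk, hpk⟩]
  show mult _ _ = 3
  rw [mult, hf, Finset.card_eq_three]
  exact ⟨_, _, _, fun h => hji (boroczkyLine_injOn hi hj h).symm,
    fun h => hik (boroczkyLine_injOn hi hk h), fun h => hjk (boroczkyLine_injOn hj hk h), rfl⟩

/-- A triple point on the `i`-th line lies on exactly two other lines, so at most two good indices
produce the same triple point. -/
lemma card_goodIdx_le {n i : ℕ} (hi : i < n) :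
    (goodIdx n i).card ≤ 2 * {p : P2 | p ∈ Tn n ∧ Incid p (boroczkyLine n i)}.ncard := by
  set S := {p : P2 | p ∈ Tn n ∧ Incid p (boroczkyLine n i)} with hS
  have hf : ∀ j, ∃ p : P2, j ∈ goodIdx n i →
      p ∈ Tn n ∧ Incid p (boroczkyLine n i) ∧ Incid p (boroczkyLine n j) := by
    intro j
    by_cases hj : j ∈ goodIdx n i
    · obtain ⟨p, hp⟩ := exists_triple_point hi hj
      exact ⟨p, fun _ => hp⟩
    · exact ⟨boroczkyLine n i, fun h => absurd h hj⟩
  choose f hf using hf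
  -- A point of `S` is determined by the set of lines of `B_n` through it.
  have hfin : S.Finite := by
    refine Set.Finite.of_injOn (f := fun p => (Boroczky n).filter fun L => Incid p L)
      (t := ((Boroczky n).powerset : Set (Finset P2))) ?_ ?_ (Finset.finite_toSet _)
    · intro p _
      exact Finset.mem_coe.2 (Finset.mem_powerset.2 (Finset.filter_subset _ _))
    · intro p hp q hq hpq
      have hp3 : ((Boroczky n).filter fun L => Incid p L).card = 3 := hp.1
      obtain ⟨L, hL, M, hM, hLM⟩ := Finset.one_lt_card.1 (by omega :
        1 < ((Boroczky n).filter fun L => Incid p L).card)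
      have hpq : ((Boroczky n).filter fun L => Incid p L)
        = (Boroczky n).filter fun L => Incid q L := hpq
      have hL' := hpq ▸ hL
      have hM' := hpq ▸ hM
      exact eq_of_incid hLM (Finset.mem_filter.1 hL).2 (Finset.mem_filter.1 hM).2
        (Finset.mem_filter.1 hL').2 (Finset.mem_filter.1 hM').2
  rw [Set.ncard_eq_toFinset_card _ hfin]
  refine Finset.card_le_mul_card_image_of_maps_to (f := f) ?_ 2 ?_
  · intro j hj
    rw [Set.Finite.mem_toFinset]
    exact ⟨(hf j hj).1, (hf j hj).2.1⟩
  · intro p hp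
    rw [Set.Finite.mem_toFinset] at hp
    have hp3 : ((Boroczky n).filter fun L => Incid p L).card = 3 := hp.1
    have hmem : boroczkyLine n i ∈ (Boroczky n).filter fun L => Incid p L :=
      Finset.mem_filter.2 ⟨boroczkyLine_mem hi, hp.2⟩
    have hc := Finset.card_erase_of_mem hmem
    rw [hp3] at hc
    rw [← show _ = 2 from hc]
    refine Finset.card_le_card_of_injOn (boroczkyLine n) ?_ ?_
    · intro j hj
      obtain ⟨hjg, rfl⟩ := Finset.mem_filter.1 hj
      have hj' := hjg
      simp only [goodIdx, Finset.mem_filter, Finset.mem_range] at hj'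
      exact Finset.mem_erase.2 ⟨fun h => hj'.2.1 (boroczkyLine_injOn hj'.1 hi h),
        Finset.mem_filter.2 ⟨boroczkyLine_mem hj'.1, (hf j hjg).2.2⟩⟩
    · intro j hj k hk h
      have hj' := (Finset.mem_filter.1 hj).1
      have hk' := (Finset.mem_filter.1 hk).1
      simp only [goodIdx, Finset.mem_filter, Finset.mem_range] at hj' hk'
      exact boroczkyLine_injOn hj'.1 hk'.1 h

/-! ### Counting the good indices -/

lemma le_card_goodIdx_of_subset {n i : ℕ} (E : Finset ℕ)
    (h : ∀ j < n, j ∉ E → j ≠ i ∧ ¬ n ∣ 2 * i + j ∧ ¬ n ∣ i + 2 * j) :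
    n ≤ (goodIdx n i).card + E.card := by
  have hsub : Finset.range n ⊆ goodIdx n i ∪ E := by
    intro j hj
    by_cases hE : j ∈ E
    · exact Finset.mem_union_right _ hE
    · exact Finset.mem_union_left _
        (Finset.mem_filter.2 ⟨hj, h j (Finset.mem_range.1 hj) hE⟩)
  have h1 := Finset.card_le_card hsub
  rw [Finset.card_range] at h1
  exact h1.trans (Finset.card_union_le _ _)

/-- A multiple of `n` below `3n` is `0`, `n` or `2n`. -/
lemma eq_of_dvd_of_lt {n m : ℕ} (h : n ∣ m) (hm : m < 3 * n) : m = 0 ∨ m = n ∨ m = 2 * n := by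
  obtain ⟨c, rfl⟩ := h
  have hc : c < 3 := by
    by_contra hc
    have := Nat.mul_le_mul_left n (not_lt.1 hc)
    omega
  interval_cases c <;> omega

/-- The solutions `j < n` of `n ∣ 2i + j`, and those of `n ∣ i + 2j`, are listed explicitly
according to the parities of `n` and `i`. -/
lemma le_card_goodIdx {n i : ℕ} (hi : i < n) : (n - 3) / 2 * 2 ≤ (goodIdx n i).card := by
  have hx : ∃ x, ∀ j < n, n ∣ 2 * i + j → j = x := by
    refine ⟨if i = 0 then 0 else if 2 * i ≤ n then n - 2 * i else 2 * n - 2 * i, ?_⟩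
    intro j hj h
    have := eq_of_dvd_of_lt h (by omega)
    split_ifs <;> omega
  obtain ⟨x, hx⟩ := hx
  rcases Nat.even_or_odd' n with ⟨m, hm | hm⟩
  · have h4 := le_card_goodIdx_of_subset (n := n) (i := i)
      {i, x, (n - i) / 2, if i = 0 then 0 else n - i / 2} (by
        intro j hj hE
        simp only [Finset.mem_insert, Finset.mem_singleton, not_or] at hE
        refine ⟨hE.1, fun h => hE.2.1 (hx j hj h), fun h => ?_⟩
        have := eq_of_dvd_of_lt h (by omega)
        split_ifs at hE <;> omega)
    have := Finset.card_le_four (a := i) (b := x) (c := (n - i) / 2)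
      (d := if i = 0 then 0 else n - i / 2)
    omega
  · have h3 := le_card_goodIdx_of_subset (n := n) (i := i)
      {i, x, if i = 0 then 0 else if i % 2 = 0 then n - i / 2 else (n - i) / 2} (by
        intro j hj hE
        simp only [Finset.mem_insert, Finset.mem_singleton, not_or] at hE
        refine ⟨hE.1, fun h => hE.2.1 (hx j hj h), fun h => ?_⟩
        have := eq_of_dvd_of_lt h (by omega)
        split_ifs at hE <;> omega)
    have := Finset.card_le_three (a := i) (b := x)
      (c := if i = 0 then 0 else if i % 2 = 0 then n - i / 2 else (n - i) / 2)
    omega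

lemma le_card_goodIdx_zero {n : ℕ} (hn : 3 ≤ n) :
    ((n - 3) / 2 + 1) * 2 ≤ (goodIdx n 0).card := by
  rcases Nat.even_or_odd' n with ⟨m, hm | hm⟩
  · have h2 := le_card_goodIdx_of_subset (n := n) (i := 0) {0, m} (by
      intro j hj hE
      simp only [Finset.mem_insert, Finset.mem_singleton, not_or] at hE
      refine ⟨hE.1, fun h => ?_, fun h => ?_⟩
      all_goals
        have := eq_of_dvd_of_lt h (by omega)
        omega)
    have := Finset.card_le_two (a := 0) (b := m)
    omega
  · have h1 := le_card_goodIdx_of_subset (n := n) (i := 0) {0} (by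
      intro j hj hE
      simp only [Finset.mem_singleton] at hE
      refine ⟨hE, fun h => ?_, fun h => ?_⟩
      all_goals
        have := eq_of_dvd_of_lt h (by omega)
        omega)
    rw [Finset.card_singleton] at h1
    omega

/-- For every `n ≥ 3`, every line of the Böröczky arrangement `B_n` contains at
least `⌊(n-3)/2⌋` points of `T_n`, and some line of `B_n` contains at least `⌊(n-3)/2⌋ + 1`
points of `T_n`. -/
theorem stmt_4 (n : ℕ) (hn : 3 ≤ n) :
    (∀ L ∈ Boroczky n, (n - 3) / 2 ≤ {p : P2 | p ∈ Tn n ∧ Incid p L}.ncard) ∧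
    (∃ L ∈ Boroczky n, (n - 3) / 2 + 1 ≤ {p : P2 | p ∈ Tn n ∧ Incid p L}.ncard) := by
  refine ⟨fun L hL => ?_, boroczkyLine n 0, boroczkyLine_mem (by omega), ?_⟩
  · obtain ⟨i, hi, rfl⟩ := Finset.mem_image.1 hL
    rw [Finset.mem_range] at hi
    have h1 := card_goodIdx_le hi
    have h2 := le_card_goodIdx hi
    omega
  · have h1 := card_goodIdx_le (n := n) (i := 0) (by omega)
    have h2 := le_card_goodIdx_zero hn
    omega
end
end

section
/- For every n ≥ 3, the Fermat arrangement F_n of 3n lines satisfies extSS(F_n) = 2: F_n is not supersolvable, no arrangement obtained from F_n by adding a single line is supersolvable, but adding the two lines x = 0 and y = 0 yields a supersolvable arrangement. -/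
/-!
Write `P = [p : q : r]` for a would-be modular point of `F_n ∪ {ℓ}` and `ℓ = [u : v : w]` (the case
`ℓ ∈ F_n` covers `F_n` itself). The singular points of `F_n` are the coordinate points and the
triple points `[1 : a : b]` with `aⁿ = bⁿ = 1`; each must be joined to `P` by a line of `F_n` or
by `ℓ`. For `[0 : 0 : 1]` this says `pⁿ = qⁿ`, or else `ℓ` passes through `P` and `w = 0`; the
other two coordinate points are similar.

* If two of the equalities among `pⁿ, qⁿ, rⁿ` hold, then `P` is a triple point `[1 : a : b]`. For an
  `n`-th root of unity `ζ` with `ζ² ≠ 1`, the triple points `[1 : aζ : bζ²]` and `[1 : aζ² : bζ]` are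
  joined to `P` by no line of `F_n`, so both lie on `ℓ`, yet they are not collinear with `P`
  (`fermat_core_triple`).
* Otherwise two of `u, v, w` vanish, so `ℓ` is a coordinate line. It contains no triple
  point, and at most one line of `F_n` passes through `P`, which cannot contain all triple points
  (`fermat_core_coord`).

After adding `x = 0` and `y = 0` the point `[0 : 0 : 1]` is modular: a singular point off these two
lines lies on some `x = ζy`, or on both some `y = ζz` and some `z = ζ'x`, hence on `y = ζζ'x`.
-/

open scoped Classical

noncomputable section

/-- The Fermat arrangement `F_n`: the `3n` lines defined by the linear factors of
`(x^n - y^n) * (y^n - z^n) * (z^n - x^n)`, namely `x - ζy`, `y - ζz`, `z - ζx`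
for `ζ` ranging over the `n`-th roots of unity. -/
def fermatLines (n : ℕ) : Finset P2 :=
  ((Polynomial.nthRoots n (1 : ℂ)).toFinset.image fun ζ => mkP 1 (-ζ) 0 (vne₀ one_ne_zero)) ∪
  ((Polynomial.nthRoots n (1 : ℂ)).toFinset.image fun ζ => mkP 0 1 (-ζ) (vne₁ one_ne_zero)) ∪
  ((Polynomial.nthRoots n (1 : ℂ)).toFinset.image fun ζ => mkP (-ζ) 0 1 (vne₂ one_ne_zero))

/-- The line `x = 0`. -/
def lineX : P2 := mkP 1 0 0 (vne₀ one_ne_zero)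

/-- The line `y = 0`. -/
def lineY : P2 := mkP 0 1 0 (vne₁ one_ne_zero)

/-- The arrangement of the `3n+2` lines given by the linear factors of
`x·y·(x^n - y^n)(y^n - z^n)(z^n - x^n)`. -/
def FermatPlus (n : ℕ) : Finset P2 := fermatLines n ∪ {lineX, lineY}

/-! ### Coordinates, incidence and membership -/

lemma incid_mkP_right (P : P2) (a b c : ℂ) (h : ![a, b, c] ≠ 0) :
    Incid P (mkP a b c h) ↔ P.rep 0 * a + P.rep 1 * b + P.rep 2 * c = 0 := by
  obtain ⟨t, ht⟩ := Projectivization.exists_smul_eq_mk_rep ℂ ![a, b, c] h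
  have e : ∀ i, (mkP a b c h).rep i = (t : ℂ) * ![a, b, c] i := fun i => by
    rw [mkP, ← ht]; rfl
  have ht0 : (t : ℂ) ≠ 0 := t.ne_zero
  rw [Incid, Fin.sum_univ_three, e, e, e]
  simp only [Matrix.cons_val]
  have : P.rep 0 * (t * a) + P.rep 1 * (t * b) + P.rep 2 * (t * c)
      = t * (P.rep 0 * a + P.rep 1 * b + P.rep 2 * c) := by ring
  rw [this, mul_eq_zero, or_iff_right ht0]

lemma incid_comm (P L : P2) : Incid P L ↔ Incid L P := by
  simp only [Incid, mul_comm]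

lemma incid_mkP_left (L : P2) (a b c : ℂ) (h : ![a, b, c] ≠ 0) :
    Incid (mkP a b c h) L ↔ a * L.rep 0 + b * L.rep 1 + c * L.rep 2 = 0 := by
  rw [incid_comm, incid_mkP_right]
  simp only [mul_comm]

lemma incid_mkP_mkP (a b c a' b' c' : ℂ) (h : ![a, b, c] ≠ 0) (h' : ![a', b', c'] ≠ 0) :
    Incid (mkP a b c h) (mkP a' b' c' h') ↔ a * a' + b * b' + c * c' = 0 := by
  obtain ⟨t, ht⟩ := Projectivization.exists_smul_eq_mk_rep ℂ ![a, b, c] h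
  have e : ∀ i, (mkP a b c h).rep i = (t : ℂ) * ![a, b, c] i := fun i => by
    rw [mkP, ← ht]; rfl
  have ht0 : (t : ℂ) ≠ 0 := t.ne_zero
  rw [incid_mkP_right, e, e, e]
  simp only [Matrix.cons_val]
  have : t * a * a' + t * b * b' + t * c * c' = t * (a * a' + b * b' + c * c') := by ring
  rw [this, mul_eq_zero, or_iff_right ht0]

/-- Equal points have proportional coordinates. -/
lemma mkP_eq {a b c a' b' c' : ℂ} {h : ![a, b, c] ≠ 0} {h' : ![a', b', c'] ≠ 0}
    (e : mkP a b c h = mkP a' b' c' h') : a * b' = a' * b ∧ a * c' = a' * c ∧ b * c' = b' * c := by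
  rw [mkP, mkP, Projectivization.mk_eq_mk_iff'] at e
  obtain ⟨t, ht⟩ := e
  have h0 := congrFun ht 0
  have h1 := congrFun ht 1
  have h2 := congrFun ht 2
  simp only [Pi.smul_apply, smul_eq_mul, Matrix.cons_val] at h0 h1 h2
  subst h0 h1 h2
  exact ⟨by ring, by ring, by ring⟩

lemma rep_coord_ne (P : P2) : ¬ (P.rep 0 = 0 ∧ P.rep 1 = 0 ∧ P.rep 2 = 0) := by
  rintro ⟨h0, h1, h2⟩
  apply P.rep_nonzero
  ext i
  fin_cases i <;> assumption

lemma mem_fermat {n : ℕ} (hn : 0 < n) (L : P2) : L ∈ fermatLines n ↔ ∃ ζ : ℂ, ζ ^ n = 1 ∧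
    (L = mkP 1 (-ζ) 0 (vne₀ one_ne_zero) ∨ L = mkP 0 1 (-ζ) (vne₁ one_ne_zero) ∨
      L = mkP (-ζ) 0 1 (vne₂ one_ne_zero)) := by
  simp only [fermatLines, Finset.mem_union, Finset.mem_image, Multiset.mem_toFinset,
    Polynomial.mem_nthRoots hn]
  constructor
  · rintro ((⟨ζ, h, rfl⟩ | ⟨ζ, h, rfl⟩) | ⟨ζ, h, rfl⟩)
    · exact ⟨ζ, h, .inl rfl⟩
    · exact ⟨ζ, h, .inr (.inl rfl)⟩
    · exact ⟨ζ, h, .inr (.inr rfl)⟩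
  · rintro ⟨ζ, h, rfl | rfl | rfl⟩
    · exact .inl (.inl ⟨ζ, h, rfl⟩)
    · exact .inl (.inr ⟨ζ, h, rfl⟩)
    · exact .inr ⟨ζ, h, rfl⟩

lemma isSing_iff (A : Finset P2) (P : P2) :
    IsSing A P ↔ ∃ L ∈ A, ∃ M ∈ A, Incid P L ∧ Incid P M ∧ L ≠ M := by
  rw [IsSing, mult, Nat.succ_le_iff, Finset.one_lt_card]
  simp only [Finset.mem_filter]
  constructor
  · rintro ⟨L, ⟨h1, h2⟩, M, ⟨h3, h4⟩, h5⟩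
    exact ⟨L, h1, M, h3, h2, h4, h5⟩
  · rintro ⟨L, h1, M, h3, h2, h4, h5⟩
    exact ⟨L, ⟨h1, h2⟩, M, ⟨h3, h4⟩, h5⟩

lemma exists_root {n : ℕ} (hn : 3 ≤ n) : ∃ ζ : ℂ, ζ ^ n = 1 ∧ ζ ≠ 1 ∧ ζ ^ 2 ≠ 1 := by
  have hp := Complex.isPrimitiveRoot_exp n (by omega)
  exact ⟨_, hp.pow_eq_one, hp.ne_one (by omega), hp.pow_ne_one_of_pos_of_lt (by omega) (by omega)⟩

lemma root_ne_zero {n : ℕ} (hn : 0 < n) {ζ : ℂ} (h : ζ ^ n = 1) : ζ ≠ 0 := by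
  rintro rfl
  rw [zero_pow hn.ne'] at h
  exact zero_ne_one h

/-! ### The algebraic core -/

/-- If `P = [p : q : r]` is a triple point, a single line `ℓ = [u : v : w]` through `P` cannot join
it to all the triple points that the lines of `F_n` miss. -/
lemma fermat_core_triple {n : ℕ} (hn : 3 ≤ n) {p q r u v w : ℂ} (hp : p ≠ 0)
    (h3 : p ^ n = q ^ n) (h2 : p ^ n = r ^ n) (hl : ¬ (u = 0 ∧ v = 0 ∧ w = 0))
    (T : ∀ a b : ℂ, a ^ n = 1 → b ^ n = 1 →
      (u * p + v * q + w * r = 0 ∧ u + v * a + w * b = 0) ∨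
        a * p = q ∨ b * q = a * r ∨ r = b * p) : False := by
  obtain ⟨ζ, hζ, hζ1, hζ2⟩ := exists_root hn
  have hζ0 := root_ne_zero (by omega) hζ
  have hpn : p ^ n ≠ 0 := pow_ne_zero n hp
  have hq : q ≠ 0 := by rintro rfl; rw [zero_pow (by omega)] at h3; exact hpn h3
  have hr : r ≠ 0 := by rintro rfl; rw [zero_pow (by omega)] at h2; exact hpn h2
  have hζ2n : (ζ ^ 2) ^ n = 1 := by rw [← pow_mul, mul_comm, pow_mul, hζ, one_pow]
  have ha : (q / p) ^ n = 1 := by rw [div_pow, ← h3, div_self hpn]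
  have hb : (r / p) ^ n = 1 := by rw [div_pow, ← h2, div_self hpn]
  have key : ∀ s t : ℂ, s ^ n = 1 → t ^ n = 1 → s ≠ 1 → t ≠ 1 → s ≠ t →
      u * p + v * q + w * r = 0 ∧ u * p + v * q * s + w * r * t = 0 := by
    intro s t hs ht hs1 ht1 hst
    rcases T (q / p * s) (r / p * t) (by rw [mul_pow, ha, hs, one_mul])
      (by rw [mul_pow, hb, ht, one_mul]) with ⟨h, h'⟩ | h | h | h
    · refine ⟨h, ?_⟩
      field_simp at h'
      linear_combination h'
    · field_simp at h
      exact absurd h hs1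
    · field_simp at h
      exact absurd h.symm hst
    · field_simp at h
      exact absurd h.symm ht1
  have hne : ζ ≠ ζ ^ 2 := fun h => hζ1 (mul_left_cancel₀ hζ0 (by linear_combination -h))
  obtain ⟨e0, e1⟩ := key ζ (ζ ^ 2) hζ hζ2n hζ1 hζ2 hne
  obtain ⟨-, e2⟩ := key (ζ ^ 2) ζ hζ2n hζ hζ2 hζ1 hne.symm
  have hm : ζ - 1 ≠ 0 := sub_ne_zero.mpr hζ1
  have f1 : v * q + w * r * (ζ + 1) = 0 :=
    mul_left_cancel₀ hm (by linear_combination e1 - e0)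
  have f2 : v * q * (ζ + 1) + w * r = 0 :=
    mul_left_cancel₀ hm (by linear_combination e2 - e0)
  have h2' : ζ + 2 ≠ 0 := by
    intro h
    have hn1 : ‖ζ‖ = 1 := Complex.norm_eq_one_of_pow_eq_one hζ (by omega)
    rw [show ζ = -2 by linear_combination h] at hn1
    norm_num at hn1
  have hw : w = 0 := by
    have : w * (r * ζ * (ζ + 2)) = 0 := by linear_combination (ζ + 1) * f1 - f2
    exact (mul_eq_zero.mp this).resolve_right (mul_ne_zero (mul_ne_zero hr hζ0) h2')
  have hv : v = 0 := by
    subst hw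
    exact (mul_eq_zero.mp (show v * q = 0 by linear_combination f1)).resolve_right hq
  have hu : u = 0 := by
    subst hw hv
    exact (mul_eq_zero.mp (show u * p = 0 by linear_combination e0)).resolve_right hp
  exact hl ⟨hu, hv, hw⟩

/-- Used when `ℓ` is a coordinate line through `P`: then `p` and `q` stand for the two nonzero
coordinates of `P` and `c` for the ratio of the same two coordinates of a triple point. All triple
points would have to lie on one line of `F_n`, although the ratio takes several values. -/
lemma fermat_core_coord {n : ℕ} (hn : 3 ≤ n) {p q : ℂ} (hp : p ≠ 0)
    (T : ∀ c : ℂ, c ^ n = 1 → c * p = q) : False := by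
  obtain ⟨ζ, hζ, hζ1, -⟩ := exists_root hn
  have e1 := T 1 (one_pow n)
  have e2 := T ζ hζ
  exact hζ1 (mul_right_cancel₀ hp (e2.trans e1.symm))

/-- `H1`, `H2`, `H3` and `T` say that every coordinate point and every triple point of `F_n` is
joined to `P = [p : q : r]` by a line of `F_n` or by `ℓ = [u : v : w]`; this is impossible. -/
lemma fermat_core {n : ℕ} (hn : 3 ≤ n) {p q r u v w : ℂ} (hP : ¬ (p = 0 ∧ q = 0 ∧ r = 0))
    (hl : ¬ (u = 0 ∧ v = 0 ∧ w = 0))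
    (H3 : p ^ n = q ^ n ∨ (u * p + v * q + w * r = 0 ∧ w = 0))
    (H2 : p ^ n = r ^ n ∨ (u * p + v * q + w * r = 0 ∧ v = 0))
    (H1 : q ^ n = r ^ n ∨ (u * p + v * q + w * r = 0 ∧ u = 0))
    (T : ∀ a b : ℂ, a ^ n = 1 → b ^ n = 1 →
      (u * p + v * q + w * r = 0 ∧ u + v * a + w * b = 0) ∨
        a * p = q ∨ b * q = a * r ∨ r = b * p) : False := by
  have hn0 : n ≠ 0 := by omega
  have triple : p ^ n = q ^ n → p ^ n = r ^ n → False := by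
    intro h3 h2
    refine fermat_core_triple hn ?_ h3 h2 hl T
    rintro rfl
    rw [zero_pow hn0] at h3 h2
    exact hP ⟨rfl, eq_zero_of_pow_eq_zero h3.symm, eq_zero_of_pow_eq_zero h2.symm⟩
  by_cases h3 : p ^ n = q ^ n
  · by_cases h2 : p ^ n = r ^ n
    · exact triple h3 h2
    by_cases h1 : q ^ n = r ^ n
    · exact h2 (h3.trans h1)
    -- here `ℓ` is the line `z = 0`
    obtain ⟨e, rfl⟩ := H2.resolve_left h2
    obtain ⟨-, rfl⟩ := H1.resolve_left h1
    have hw : w ≠ 0 := fun h => hl ⟨rfl, rfl, h⟩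
    have hr : r = 0 := (mul_eq_zero.mp (show w * r = 0 by linear_combination e)).resolve_left hw
    subst hr
    have hp : p ≠ 0 := fun h => h2 (by rw [h])
    have hq : q ≠ 0 := fun h => h1 (by rw [h])
    refine fermat_core_coord hn hp (q := q) fun c hc => ?_
    rcases T c 1 hc (one_pow n) with ⟨-, h⟩ | h | h | h
    · exact absurd (by linear_combination h) hw
    · exact h
    · exact absurd (by linear_combination h) hq
    · exact absurd (by linear_combination -h) hp
  obtain ⟨e, rfl⟩ := H3.resolve_left h3
  by_cases h2 : p ^ n = r ^ n
  · by_cases h1 : q ^ n = r ^ n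
    · exact h3 (h2.trans h1.symm)
    -- here `ℓ` is the line `y = 0`
    obtain ⟨-, rfl⟩ := H1.resolve_left h1
    have hv : v ≠ 0 := fun h => hl ⟨rfl, h, rfl⟩
    have hq : q = 0 := (mul_eq_zero.mp (show v * q = 0 by linear_combination e)).resolve_left hv
    subst hq
    have hp : p ≠ 0 := fun h => h3 (by rw [h])
    have hr : r ≠ 0 := fun h => h1 (by rw [h])
    refine fermat_core_coord hn hp (q := r) fun c hc => ?_
    rcases T 1 c (one_pow n) hc with ⟨-, h⟩ | h | h | h
    · exact absurd (by linear_combination h) hv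
    · exact absurd (by linear_combination h) hp
    · exact absurd (by linear_combination -h) hr
    · exact h.symm
  obtain ⟨-, rfl⟩ := H2.resolve_left h2
  -- here `ℓ` is the line `x = 0`
  have hu : u ≠ 0 := fun h => hl ⟨h, rfl, rfl⟩
  have hp : p = 0 := (mul_eq_zero.mp (show u * p = 0 by linear_combination e)).resolve_left hu
  subst hp
  have hq : q ≠ 0 := fun h => h3 (by rw [h])
  have hr : r ≠ 0 := fun h => h2 (by rw [h])
  refine fermat_core_coord hn hq (q := r) fun c hc => ?_
  rcases T 1 c (one_pow n) hc with ⟨-, h⟩ | h | h | h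
  · exact absurd (by linear_combination h) hu
  · exact absurd (by linear_combination -h) hq
  · linear_combination h
  · exact absurd (by linear_combination h) hr

/-! ### No supersolvable extension by at most one line -/

lemma pow_eq_of_root {n : ℕ} {x y ζ : ℂ} (hζ : ζ ^ n = 1) (h : x = ζ * y) : x ^ n = y ^ n := by
  rw [h, mul_pow, hζ, one_mul]

lemma isSing_insert_fermat {n : ℕ} (ℓ Q : P2) {L M : P2} (hL : L ∈ fermatLines n)
    (hM : M ∈ fermatLines n) (h1 : Incid Q L) (h2 : Incid Q M) (h : L ≠ M) :
    IsSing (insert ℓ (fermatLines n)) Q :=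
  (isSing_iff _ _).mpr
    ⟨L, Finset.mem_insert_of_mem hL, M, Finset.mem_insert_of_mem hM, h1, h2, h⟩

/-- The case `ℓ ∈ F_n` is included, so this also covers `F_n` itself. -/
lemma not_supersolvable_insert {n : ℕ} (hn : 3 ≤ n) (ℓ : P2) :
    ¬ Supersolvable (insert ℓ (fermatLines n)) := by
  rintro ⟨P, -, hmod⟩
  have hn0 : 0 < n := by omega
  obtain ⟨ζ, hζ, hζ1, -⟩ := exists_root hn
  have one_pow_n : (1 : ℂ) ^ n = 1 := one_pow n
  have join : ∀ Q : P2, IsSing (insert ℓ (fermatLines n)) Q → Q ≠ P →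
      (Incid P ℓ ∧ Incid Q ℓ) ∨ ∃ L ∈ fermatLines n, Incid P L ∧ Incid Q L := by
    intro Q hQ hne
    obtain ⟨L, hL, h⟩ := hmod Q hQ hne
    rcases Finset.mem_insert.mp hL with rfl | hL
    · exact .inl h
    · exact .inr ⟨L, hL, h⟩
  have hPl : Incid P ℓ → ℓ.rep 0 * P.rep 0 + ℓ.rep 1 * P.rep 1 + ℓ.rep 2 * P.rep 2 = 0 := by
    intro h
    rw [Incid, Fin.sum_univ_three] at h
    linear_combination h
  refine fermat_core hn (rep_coord_ne P) (rep_coord_ne ℓ) ?_ ?_ ?_ ?_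
  · by_cases hne : mkP 0 0 1 (vne₂ one_ne_zero) = P
    · left
      have h1 := (incid_mkP_right P 1 0 0 (vne₀ one_ne_zero)).mp
        (by rw [← hne, incid_mkP_mkP]; ring)
      have h2 := (incid_mkP_right P 0 1 0 (vne₁ one_ne_zero)).mp
        (by rw [← hne, incid_mkP_mkP]; ring)
      rw [show P.rep 0 = P.rep 1 by linear_combination h1 - h2]
    have hs := isSing_insert_fermat (n := n) ℓ (mkP 0 0 1 (vne₂ one_ne_zero))
      ((mem_fermat hn0 _).mpr ⟨1, one_pow_n, .inl rfl⟩)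
      ((mem_fermat hn0 _).mpr ⟨ζ, hζ, .inl rfl⟩)
      (by rw [incid_mkP_mkP]; ring) (by rw [incid_mkP_mkP]; ring)
      (fun h => hζ1 (by linear_combination -(mkP_eq h).1))
    rcases join _ hs hne with ⟨h, h'⟩ | ⟨L, hL, h, h'⟩
    · rw [incid_mkP_left] at h'
      exact .inr ⟨hPl h, by linear_combination h'⟩
    · left
      obtain ⟨ξ, hξ, rfl | rfl | rfl⟩ := (mem_fermat hn0 _).mp hL
      · rw [incid_mkP_right] at h
        exact pow_eq_of_root hξ (by linear_combination h)
      · rw [incid_mkP_mkP] at h'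
        exact absurd (by linear_combination -h') (root_ne_zero hn0 hξ)
      · rw [incid_mkP_mkP] at h'
        exact absurd (by linear_combination h') (one_ne_zero (α := ℂ))
  · by_cases hne : mkP 0 1 0 (vne₁ one_ne_zero) = P
    · left
      have h1 := (incid_mkP_right P 1 0 0 (vne₀ one_ne_zero)).mp
        (by rw [← hne, incid_mkP_mkP]; ring)
      have h2 := (incid_mkP_right P 0 0 1 (vne₂ one_ne_zero)).mp
        (by rw [← hne, incid_mkP_mkP]; ring)
      rw [show P.rep 0 = P.rep 2 by linear_combination h1 - h2]
    have hs := isSing_insert_fermat (n := n) ℓ (mkP 0 1 0 (vne₁ one_ne_zero))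
      ((mem_fermat hn0 _).mpr ⟨1, one_pow_n, .inr (.inr rfl)⟩)
      ((mem_fermat hn0 _).mpr ⟨ζ, hζ, .inr (.inr rfl)⟩)
      (by rw [incid_mkP_mkP]; ring) (by rw [incid_mkP_mkP]; ring)
      (fun h => hζ1 (by linear_combination (mkP_eq h).2.1))
    rcases join _ hs hne with ⟨h, h'⟩ | ⟨L, hL, h, h'⟩
    · rw [incid_mkP_left] at h'
      exact .inr ⟨hPl h, by linear_combination h'⟩
    · left
      obtain ⟨ξ, hξ, rfl | rfl | rfl⟩ := (mem_fermat hn0 _).mp hL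
      · rw [incid_mkP_mkP] at h'
        exact absurd (by linear_combination -h') (root_ne_zero hn0 hξ)
      · rw [incid_mkP_mkP] at h'
        exact absurd (by linear_combination h') (one_ne_zero (α := ℂ))
      · rw [incid_mkP_right] at h
        exact (pow_eq_of_root hξ (by linear_combination h)).symm
  · by_cases hne : mkP 1 0 0 (vne₀ one_ne_zero) = P
    · left
      have h1 := (incid_mkP_right P 0 1 0 (vne₁ one_ne_zero)).mp
        (by rw [← hne, incid_mkP_mkP]; ring)
      have h2 := (incid_mkP_right P 0 0 1 (vne₂ one_ne_zero)).mp
        (by rw [← hne, incid_mkP_mkP]; ring)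
      rw [show P.rep 1 = P.rep 2 by linear_combination h1 - h2]
    have hs := isSing_insert_fermat (n := n) ℓ (mkP 1 0 0 (vne₀ one_ne_zero))
      ((mem_fermat hn0 _).mpr ⟨1, one_pow_n, .inr (.inl rfl)⟩)
      ((mem_fermat hn0 _).mpr ⟨ζ, hζ, .inr (.inl rfl)⟩)
      (by rw [incid_mkP_mkP]; ring) (by rw [incid_mkP_mkP]; ring)
      (fun h => hζ1 (by linear_combination -(mkP_eq h).2.2))
    rcases join _ hs hne with ⟨h, h'⟩ | ⟨L, hL, h, h'⟩
    · rw [incid_mkP_left] at h'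
      exact .inr ⟨hPl h, by linear_combination h'⟩
    · left
      obtain ⟨ξ, hξ, rfl | rfl | rfl⟩ := (mem_fermat hn0 _).mp hL
      · rw [incid_mkP_mkP] at h'
        exact absurd (by linear_combination h') (one_ne_zero (α := ℂ))
      · rw [incid_mkP_right] at h
        exact pow_eq_of_root hξ (by linear_combination h)
      · rw [incid_mkP_mkP] at h'
        exact absurd (by linear_combination -h') (root_ne_zero hn0 hξ)
  · intro a b ha hb
    have ha0 := root_ne_zero hn0 ha
    have hb0 := root_ne_zero hn0 hb
    by_cases hne : mkP 1 a b (vne₀ one_ne_zero) = P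
    · right; left
      have h1 := (incid_mkP_right P a (-1) 0 (vne₀ ha0)).mp
        (by rw [← hne, incid_mkP_mkP]; ring)
      linear_combination h1
    have hs := isSing_insert_fermat (n := n) ℓ (mkP 1 a b (vne₀ one_ne_zero))
      ((mem_fermat hn0 _).mpr ⟨a⁻¹, by rw [inv_pow, ha, inv_one], .inl rfl⟩)
      ((mem_fermat hn0 _).mpr ⟨b, hb, .inr (.inr rfl)⟩)
      (by rw [incid_mkP_mkP]; field_simp; ring) (by rw [incid_mkP_mkP]; ring)
      (fun h => one_ne_zero (α := ℂ) (by linear_combination (mkP_eq h).2.1))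
    rcases join _ hs hne with ⟨h, h'⟩ | ⟨L, hL, h, h'⟩
    · rw [incid_mkP_left] at h'
      exact .inl ⟨hPl h, by linear_combination h'⟩
    · right
      obtain ⟨ξ, hξ, rfl | rfl | rfl⟩ := (mem_fermat hn0 _).mp hL
      · rw [incid_mkP_right] at h
        rw [incid_mkP_mkP] at h'
        left
        linear_combination a * h - P.rep 1 * h'
      · rw [incid_mkP_right] at h
        rw [incid_mkP_mkP] at h'
        right; left
        linear_combination b * h - P.rep 2 * h'
      · rw [incid_mkP_right] at h
        rw [incid_mkP_mkP] at h'
        right; right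
        linear_combination h - P.rep 0 * h'

/-! ### The extension by two lines, and cardinalities -/

lemma supersolvable_plus {n : ℕ} (hn : 3 ≤ n) :
    Supersolvable (fermatLines n ∪ {lineX, lineY}) := by
  have hn0 : 0 < n := by omega
  have hX : lineX ∈ fermatLines n ∪ {lineX, lineY} := by simp
  have hY : lineY ∈ fermatLines n ∪ {lineX, lineY} := by simp
  refine ⟨mkP 0 0 1 (vne₂ one_ne_zero), ?_, ?_⟩
  · refine (isSing_iff _ _).mpr ⟨lineX, hX, lineY, hY, ?_, ?_, ?_⟩
    · rw [lineX, incid_mkP_mkP]; ring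
    · rw [lineY, incid_mkP_mkP]; ring
    · intro h
      exact one_ne_zero (α := ℂ) (by linear_combination (mkP_eq h).1)
  intro Q hQ _
  by_cases hp : Q.rep 0 = 0
  · exact ⟨lineX, hX, by rw [lineX, incid_mkP_mkP]; ring,
      by rw [lineX, incid_mkP_right]; linear_combination hp⟩
  by_cases hq : Q.rep 1 = 0
  · exact ⟨lineY, hY, by rw [lineY, incid_mkP_mkP]; ring,
      by rw [lineY, incid_mkP_right]; linear_combination hq⟩
  have fin : ∀ ζ : ℂ, ζ ^ n = 1 → Q.rep 0 = ζ * Q.rep 1 →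
      ∃ L ∈ fermatLines n ∪ {lineX, lineY},
        Incid (mkP 0 0 1 (vne₂ one_ne_zero)) L ∧ Incid Q L := by
    intro ζ hζ h
    refine ⟨_, Finset.mem_union_left _ ((mem_fermat hn0 _).mpr ⟨ζ, hζ, .inl rfl⟩), ?_, ?_⟩
    · rw [incid_mkP_mkP]; ring
    · rw [incid_mkP_right]; linear_combination h
  have cls : ∀ L ∈ fermatLines n ∪ {lineX, lineY}, Incid Q L → ∃ ζ : ℂ, ζ ^ n = 1 ∧
      (Q.rep 0 = ζ * Q.rep 1 ∨
        (Q.rep 1 = ζ * Q.rep 2 ∧ L = mkP 0 1 (-ζ) (vne₁ one_ne_zero)) ∨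
        (Q.rep 2 = ζ * Q.rep 0 ∧ L = mkP (-ζ) 0 1 (vne₂ one_ne_zero))) := by
    intro L hL hQL
    simp only [Finset.mem_union, Finset.mem_insert, Finset.mem_singleton] at hL
    rcases hL with hL | rfl | rfl
    · obtain ⟨ζ, hζ, rfl | rfl | rfl⟩ := (mem_fermat hn0 _).mp hL <;>
        rw [incid_mkP_right] at hQL <;> refine ⟨ζ, hζ, ?_⟩
      · exact .inl (by linear_combination hQL)
      · exact .inr (.inl ⟨by linear_combination hQL, rfl⟩)
      · exact .inr (.inr ⟨by linear_combination hQL, rfl⟩)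
    · rw [lineX, incid_mkP_right] at hQL
      exact absurd (by linear_combination hQL) hp
    · rw [lineY, incid_mkP_right] at hQL
      exact absurd (by linear_combination hQL) hq
  have two : ∀ ζ ξ : ℂ, ζ ^ n = 1 → ξ ^ n = 1 → Q.rep 1 = ζ * Q.rep 2 → Q.rep 2 = ξ * Q.rep 0 →
      ∃ L ∈ fermatLines n ∪ {lineX, lineY},
        Incid (mkP 0 0 1 (vne₂ one_ne_zero)) L ∧ Incid Q L := by
    intro ζ ξ hζ hξ h1 h2
    have z0 := root_ne_zero hn0 hζ
    have x0 := root_ne_zero hn0 hξ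
    refine fin (ζ * ξ)⁻¹ (by rw [inv_pow, mul_pow, hζ, hξ, one_mul, inv_one]) ?_
    rw [h1, h2]
    field_simp
  obtain ⟨L, hL, M, hM, hQL, hQM, hne⟩ := (isSing_iff _ _).mp hQ
  obtain ⟨ζ, hζ, h | ⟨h, rfl⟩ | ⟨h, rfl⟩⟩ := cls L hL hQL
  · exact fin ζ hζ h
  · obtain ⟨ξ, hξ, h' | ⟨h', rfl⟩ | ⟨h', rfl⟩⟩ := cls M hM hQM
    · exact fin ξ hξ h'
    · have hr : Q.rep 2 ≠ 0 := fun h0 => hq (by rw [h, h0, mul_zero])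
      obtain rfl : ζ = ξ := mul_right_cancel₀ hr (h.symm.trans h')
      exact absurd rfl hne
    · exact two ζ ξ hζ hξ h h'
  · obtain ⟨ξ, hξ, h' | ⟨h', rfl⟩ | ⟨h', rfl⟩⟩ := cls M hM hQM
    · exact fin ξ hξ h'
    · exact two ξ ζ hξ hζ h' h
    · obtain rfl : ζ = ξ := mul_right_cancel₀ hp (h.symm.trans h')
      exact absurd rfl hne

lemma card_fermat {n : ℕ} (hn : 3 ≤ n) : (fermatLines n).card = 3 * n := by
  have hn0 : 0 < n := by omega
  have hc : (Polynomial.nthRoots n (1 : ℂ)).toFinset.card = n := by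
    have := (Complex.isPrimitiveRoot_exp n (by omega)).card_nthRootsFinset
    rwa [Polynomial.nthRootsFinset_def] at this
  have nz : ∀ ζ : ℂ, ζ ∈ (Polynomial.nthRoots n (1 : ℂ)).toFinset → ζ ≠ 0 := by
    intro ζ h
    rw [Multiset.mem_toFinset, Polynomial.mem_nthRoots hn0] at h
    exact root_ne_zero hn0 h
  rw [fermatLines, Finset.card_union_of_disjoint, Finset.card_union_of_disjoint,
    Finset.card_image_of_injective, Finset.card_image_of_injective,
    Finset.card_image_of_injective, hc]
  · ring
  · intro a b h
    linear_combination -(mkP_eq h).2.1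
  · intro a b h
    linear_combination (mkP_eq h).2.2
  · intro a b h
    linear_combination (mkP_eq h).1
  · rw [Finset.disjoint_left]
    intro L h1 h2
    obtain ⟨a, ha, rfl⟩ := Finset.mem_image.mp h1
    obtain ⟨b, hb, h⟩ := Finset.mem_image.mp h2
    exact one_ne_zero (α := ℂ) (by linear_combination -(mkP_eq h).1)
  · rw [Finset.disjoint_left]
    intro L h1 h2
    obtain ⟨b, hb, h⟩ := Finset.mem_image.mp h2
    rcases Finset.mem_union.mp h1 with h1 | h1
    · obtain ⟨a, ha, rfl⟩ := Finset.mem_image.mp h1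
      exact one_ne_zero (α := ℂ) (by linear_combination -(mkP_eq h).2.1)
    · obtain ⟨a, ha, rfl⟩ := Finset.mem_image.mp h1
      exact nz b hb (by linear_combination -(mkP_eq h).1)

lemma card_plus {n : ℕ} (hn : 3 ≤ n) :
    (fermatLines n ∪ {lineX, lineY}).card = (fermatLines n).card + 2 := by
  have hn0 : 0 < n := by omega
  have hXY : lineX ≠ lineY := fun h =>
    one_ne_zero (α := ℂ) (by linear_combination (mkP_eq h).1)
  rw [Finset.card_union_of_disjoint, Finset.card_pair hXY]
  rw [Finset.disjoint_left]
  intro L hL h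
  simp only [Finset.mem_insert, Finset.mem_singleton] at h
  obtain ⟨ζ, hζ, hL⟩ := (mem_fermat hn0 _).mp hL
  have hz := root_ne_zero hn0 hζ
  rcases h with rfl | rfl
  · rcases hL with h | h | h
    · exact hz (by linear_combination -(mkP_eq h).1)
    · exact one_ne_zero (α := ℂ) (by linear_combination (mkP_eq h).1)
    · exact one_ne_zero (α := ℂ) (by linear_combination (mkP_eq h).2.1)
  · rcases hL with h | h | h
    · exact one_ne_zero (α := ℂ) (by linear_combination -(mkP_eq h).1)
    · exact hz (by linear_combination -(mkP_eq h).2.2)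
    · exact one_ne_zero (α := ℂ) (by linear_combination (mkP_eq h).2.2)

lemma not_supersolvable_fermat {n : ℕ} (hn : 3 ≤ n) : ¬ Supersolvable (fermatLines n) := by
  have hmem : mkP 1 (-1) 0 (vne₀ one_ne_zero) ∈ fermatLines n :=
    (mem_fermat (by omega) _).mpr ⟨1, one_pow n, .inl rfl⟩
  have h := not_supersolvable_insert hn (mkP 1 (-1) 0 (vne₀ one_ne_zero))
  rwa [Finset.insert_eq_of_mem hmem] at h

lemma extSS_fermat {n : ℕ} (hn : 3 ≤ n) : extSS (fermatLines n) = 2 := by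
  refine le_antisymm (Nat.sInf_le
    ⟨_, Finset.subset_union_left, supersolvable_plus hn, card_plus hn⟩) ?_
  refine le_csInf ⟨2, _, Finset.subset_union_left, supersolvable_plus hn, card_plus hn⟩ ?_
  rintro k ⟨B, hsub, hB, hcard⟩
  by_contra hk
  have hd := Finset.card_sdiff_add_card_eq_card hsub
  obtain hk | hk : k = 0 ∨ k = 1 := by omega
  · rw [← Finset.eq_of_subset_of_card_le hsub (by omega)] at hB
    exact not_supersolvable_fermat hn hB
  · obtain ⟨ℓ, hℓ⟩ := Finset.card_eq_one.mp (show (B \ fermatLines n).card = 1 by omega)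
    have hBe : B = insert ℓ (fermatLines n) := by
      rw [← Finset.sdiff_union_of_subset hsub, hℓ, Finset.insert_eq]
    rw [hBe] at hB
    exact not_supersolvable_insert hn ℓ hB

/-- For every `n ≥ 3`, the Fermat arrangement `F_n` of `3n` lines satisfies
`extSS(F_n) = 2`: `F_n` is not supersolvable, no arrangement obtained from `F_n` by adding a
single line is supersolvable, but adding the two lines `x = 0` and `y = 0` yields a
supersolvable arrangement. -/
theorem stmt_12 (n : ℕ) (hn : 3 ≤ n) :
    (fermatLines n).card = 3 * n ∧
    extSS (fermatLines n) = 2 ∧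
    ¬ Supersolvable (fermatLines n) ∧
    (∀ ℓ : P2, ℓ ∉ fermatLines n → ¬ Supersolvable (insert ℓ (fermatLines n))) ∧
    Supersolvable (fermatLines n ∪ {lineX, lineY}) := by
  exact ⟨card_fermat hn, extSS_fermat hn, not_supersolvable_fermat hn,
    fun ℓ _ => not_supersolvable_insert hn ℓ, supersolvable_plus hn⟩
end
end

section
/- For every n ≥ 3, the arrangement of 3n + 2 lines in ℙ²(ℂ) consisting of the zero loci of the linear factors of x·y·(xⁿ − yⁿ)(yⁿ − zⁿ)(zⁿ − xⁿ) has the following singular points and no others: exactly one point of multiplicity n + 2 (namely [0:0:1]), exactly two points of multiplicity n + 1 (namely [0:1:0] and [1:0:0]), exactly n² points of multiplicity 3, and exactly 2n points of multiplicity 2; i.e., t_2 = 2n, t_3 = n², t_{n+1} = 2, t_{n+2} = 1. -/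
/-!
Membership in each of the three Fermat pencils and in `{x = 0, y = 0}` is tested on homogeneous
coordinates, so the multiplicity at `[a : b : c]` is
`N(a, b) + N(b, c) + N(c, a) + [a = 0] + [b = 0]`, where `N(u, v)` counts the `n`-th roots of
unity `ζ` with `u = ζ v` (`mult_mkP`). The count `N(u, v)` is `n` when `u = v = 0`, is `0` when only
`v` vanishes, and is otherwise `1` or `0` according to whether `u ^ n = v ^ n` (`rootCount_zero`,
`rootCount_ne`).

Every point is exactly one of `[s : t : 1]`, `[1 : t : 0]`, `[0 : 1 : 0]` (`P2_cases`), and the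
formula gives its multiplicity in each chart (`mult_affine`, `mult_infinity`, `mult_vertical`).
Since `n ≥ 3`, the values `2`, `3`, `n + 1`, `n + 2` are distinct. The triple points are the
`[s : t : 1]` with `s`, `t` roots of unity, and the double points are `[0 : t : 1]` and `[s : 0 : 1]`
with `s`, `t` roots of unity.
-/

open scoped Classical

noncomputable section

/-! ### Homogeneous coordinates and incidence -/

lemma mkP_eq_iff {a b c d e f : ℂ} (h : ![a, b, c] ≠ 0) (h' : ![d, e, f] ≠ 0) :
    mkP a b c h = mkP d e f h' ↔ ∃ k : ℂ, k * d = a ∧ k * e = b ∧ k * f = c := by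
  unfold mkP
  rw [Projectivization.mk_eq_mk_iff']
  simp [funext_iff, Fin.forall_fin_succ]

/-- Incidence may be tested on any homogeneous coordinates, not only on the chosen
representatives. -/
lemma incid_mkP {a b c d e f : ℂ} (h : ![a, b, c] ≠ 0) (h' : ![d, e, f] ≠ 0) :
    Incid (mkP a b c h) (mkP d e f h') ↔ a * d + b * e + c * f = 0 := by
  obtain ⟨u, hu⟩ := Projectivization.exists_smul_eq_mk_rep ℂ ![a, b, c] h
  obtain ⟨v, hv⟩ := Projectivization.exists_smul_eq_mk_rep ℂ ![d, e, f] h'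
  have key : ∑ i : Fin 3, (mkP a b c h).rep i * (mkP d e f h').rep i
      = (u : ℂ) * (v : ℂ) * (a * d + b * e + c * f) := by
    unfold mkP
    rw [← hu, ← hv]
    simp [Fin.sum_univ_three, Units.smul_def]
    ring
  unfold Incid
  rw [key]
  simp

/-! ### Roots of unity -/

/-- The finite set of `n`-th roots of unity in `ℂ`. -/
def muN (n : ℕ) : Finset ℂ := (Polynomial.nthRoots n (1 : ℂ)).toFinset

lemma mem_muN {n : ℕ} (hn : 3 ≤ n) {z : ℂ} : z ∈ muN n ↔ z ^ n = 1 := by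
  simp [muN, Polynomial.mem_nthRoots (show 0 < n by omega)]

lemma card_muN {n : ℕ} (hn : 3 ≤ n) : (muN n).card = n := by
  have h := Complex.isPrimitiveRoot_exp n (by omega)
  have h2 := h.card_nthRootsFinset
  have h3 : muN n = Polynomial.nthRootsFinset n (1 : ℂ) := by
    ext z
    rw [mem_muN hn, Polynomial.mem_nthRootsFinset (by omega)]
  rw [h3, h2]

lemma muN_ne_zero {n : ℕ} (hn : 3 ≤ n) {z : ℂ} (hz : z ∈ muN n) : z ≠ 0 := by
  rintro rfl
  rw [mem_muN hn, zero_pow (by omega)] at hz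
  exact zero_ne_one hz

/-- The number of `n`-th roots of unity `ζ` with `a = ζ b`. -/
def rootCount (n : ℕ) (a b : ℂ) : ℕ := ((muN n).filter fun ζ => a = ζ * b).card

lemma rootCount_zero {n : ℕ} (hn : 3 ≤ n) (a : ℂ) :
    rootCount n a 0 = if a = 0 then n else 0 := by
  unfold rootCount
  split_ifs with h <;> simp [h, card_muN hn]

lemma rootCount_ne {n : ℕ} (hn : 3 ≤ n) (a : ℂ) {b : ℂ} (hb : b ≠ 0) :
    rootCount n a b = if a ^ n = b ^ n then 1 else 0 := by
  unfold rootCount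
  split_ifs with h
  · rw [Finset.card_eq_one]
    refine ⟨a / b, ?_⟩
    ext z
    simp only [Finset.mem_filter, mem_muN hn, Finset.mem_singleton]
    constructor
    · rintro ⟨-, rfl⟩
      field_simp
    · rintro rfl
      exact ⟨by rw [div_pow, h, div_self (pow_ne_zero _ hb)], by field_simp⟩
  · rw [Finset.card_eq_zero, Finset.filter_eq_empty_iff]
    rintro z hz rfl
    rw [mem_muN hn] at hz
    exact h (by rw [mul_pow, hz, one_mul])

/-! ### The multiplicity formula -/

/-- The multiplicity formula: the three pencils and the two coordinate lines are pairwise disjoint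
families of lines, so their contributions at a point add up. -/
lemma mult_mkP {n : ℕ} (hn : 3 ≤ n) {a b c : ℂ} (h : ![a, b, c] ≠ 0) :
    mult (FermatPlus n) (mkP a b c h) =
      rootCount n a b + rootCount n b c + rootCount n c a
        + (if a = 0 then 1 else 0) + (if b = 0 then 1 else 0) := by
  have e1 : (((muN n).image fun ζ => mkP 1 (-ζ) 0 (vne₀ one_ne_zero)).filter
      fun L => Incid (mkP a b c h) L).card = rootCount n a b := by
    rw [Finset.filter_image, Finset.card_image_of_injective]
    · unfold rootCount
      congr 1
      ext z
      simp only [Finset.mem_filter, incid_mkP]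
      grind
    · intro z w hzw
      obtain ⟨k, h1, h2, h3⟩ := (mkP_eq_iff _ _).1 hzw
      grind
  have e2 : (((muN n).image fun ζ => mkP 0 1 (-ζ) (vne₁ one_ne_zero)).filter
      fun L => Incid (mkP a b c h) L).card = rootCount n b c := by
    rw [Finset.filter_image, Finset.card_image_of_injective]
    · unfold rootCount
      congr 1
      ext z
      simp only [Finset.mem_filter, incid_mkP]
      grind
    · intro z w hzw
      obtain ⟨k, h1, h2, h3⟩ := (mkP_eq_iff _ _).1 hzw
      grind
  have e3 : (((muN n).image fun ζ => mkP (-ζ) 0 1 (vne₂ one_ne_zero)).filter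
      fun L => Incid (mkP a b c h) L).card = rootCount n c a := by
    rw [Finset.filter_image, Finset.card_image_of_injective]
    · unfold rootCount
      congr 1
      ext z
      simp only [Finset.mem_filter, incid_mkP]
      grind
    · intro z w hzw
      obtain ⟨k, h1, h2, h3⟩ := (mkP_eq_iff _ _).1 hzw
      grind
  have hXY : lineX ≠ lineY := by
    intro hh
    obtain ⟨k, h1, h2, h3⟩ := (mkP_eq_iff _ _).1 hh
    simp at h1
  have e4 : (({lineX, lineY} : Finset P2).filter
      fun L => Incid (mkP a b c h) L).card = (if a = 0 then 1 else 0) + (if b = 0 then 1 else 0) := by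
    have hX : Incid (mkP a b c h) lineX ↔ a = 0 := by
      unfold lineX
      rw [incid_mkP]
      simp
    have hY : Incid (mkP a b c h) lineY ↔ b = 0 := by
      unfold lineY
      rw [incid_mkP]
      simp
    rw [Finset.filter_insert, Finset.filter_singleton]
    simp only [hX, hY]
    split_ifs <;> simp [hXY]
  have d12 : Disjoint ((muN n).image fun ζ => mkP 1 (-ζ) 0 (vne₀ one_ne_zero))
      ((muN n).image fun ζ => mkP 0 1 (-ζ) (vne₁ one_ne_zero)) := by
    rw [Finset.disjoint_left]
    simp only [Finset.mem_image]
    rintro _ ⟨z, hz, rfl⟩ ⟨w, hw, hzw⟩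
    obtain ⟨k, h1, h2, h3⟩ := (mkP_eq_iff _ _).1 hzw
    grind
  have d123 : Disjoint (((muN n).image fun ζ => mkP 1 (-ζ) 0 (vne₀ one_ne_zero)) ∪
      ((muN n).image fun ζ => mkP 0 1 (-ζ) (vne₁ one_ne_zero)))
      ((muN n).image fun ζ => mkP (-ζ) 0 1 (vne₂ one_ne_zero)) := by
    rw [Finset.disjoint_left]
    simp only [Finset.mem_image, Finset.mem_union]
    rintro _ (⟨z, hz, rfl⟩ | ⟨z, hz, rfl⟩) ⟨w, hw, hzw⟩
    all_goals
      obtain ⟨k, h1, h2, h3⟩ := (mkP_eq_iff _ _).1 hzw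
      have := muN_ne_zero hn hz
      have := muN_ne_zero hn hw
      grind
  have d1234 : Disjoint (fermatLines n) {lineX, lineY} := by
    rw [Finset.disjoint_left]
    unfold fermatLines
    simp only [Finset.mem_image, Finset.mem_union, Finset.mem_insert, Finset.mem_singleton]
    rintro _ ((⟨z, hz, rfl⟩ | ⟨z, hz, rfl⟩) | ⟨z, hz, rfl⟩) (hzw | hzw)
    all_goals
      obtain ⟨k, h1, h2, h3⟩ := (mkP_eq_iff _ _).1 hzw
      have := muN_ne_zero hn hz
      grind
  unfold mult FermatPlus
  rw [Finset.filter_union, Finset.card_union_of_disjoint (Finset.disjoint_filter_filter d1234), e4]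
  unfold fermatLines
  change (Finset.filter _ ((((muN n).image fun ζ => mkP 1 (-ζ) 0 (vne₀ one_ne_zero)) ∪
      ((muN n).image fun ζ => mkP 0 1 (-ζ) (vne₁ one_ne_zero))) ∪
      ((muN n).image fun ζ => mkP (-ζ) 0 1 (vne₂ one_ne_zero)))).card + _ = _
  rw [Finset.filter_union, Finset.card_union_of_disjoint (Finset.disjoint_filter_filter d123),
    Finset.filter_union, Finset.card_union_of_disjoint (Finset.disjoint_filter_filter d12),
    e1, e2, e3]
  ring

/-! ### Charts of the plane -/

/-- The point `[s : t : 1]` of the affine chart `z ≠ 0`. -/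
def aff (s t : ℂ) : P2 := mkP s t 1 (vne₂ one_ne_zero)

/-- The point `[1 : t : 0]` of the line `z = 0`. -/
def inf (t : ℂ) : P2 := mkP 1 t 0 (vne₀ one_ne_zero)

/-- The point `[0 : 1 : 0]`, the one missed by `aff` and `inf`. -/
def vert : P2 := mkP 0 1 0 (vne₁ one_ne_zero)

lemma P2_cases (p : P2) : (∃ s t, p = aff s t) ∨ (∃ t, p = inf t) ∨ p = vert := by
  induction p using Projectivization.ind with
  | h v hv =>
    have e : v = ![v 0, v 1, v 2] := by
      ext i
      fin_cases i <;> rfl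
    have hv' : ![v 0, v 1, v 2] ≠ 0 := e ▸ hv
    have e' : Projectivization.mk ℂ v hv = mkP (v 0) (v 1) (v 2) hv' := by
      unfold mkP
      congr 1
    rw [e']
    unfold aff inf vert
    simp only [mkP_eq_iff]
    by_cases h2 : v 2 = 0
    · by_cases h0 : v 0 = 0
      · exact Or.inr (Or.inr ⟨v 1, by simp [h0, h2]⟩)
      · exact Or.inr (Or.inl ⟨v 1 / v 0, v 0, by simp, by field_simp, by simp [h2]⟩)
    · exact Or.inl ⟨v 0 / v 2, v 1 / v 2, v 2, by field_simp, by field_simp, by simp⟩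

lemma aff_inj {s t s' t' : ℂ} : aff s t = aff s' t' ↔ s = s' ∧ t = t' := by
  unfold aff
  rw [mkP_eq_iff]
  grind

lemma inf_inj {t t' : ℂ} : inf t = inf t' ↔ t = t' := by
  unfold inf
  rw [mkP_eq_iff]
  grind

lemma aff_ne_inf {s t t' : ℂ} : aff s t ≠ inf t' := by
  unfold aff inf
  rw [Ne, mkP_eq_iff]
  grind

lemma aff_ne_vert {s t : ℂ} : aff s t ≠ vert := by
  unfold aff vert
  rw [Ne, mkP_eq_iff]
  grind

lemma inf_ne_vert {t : ℂ} : inf t ≠ vert := by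
  unfold inf vert
  rw [Ne, mkP_eq_iff]
  grind

/-! ### Multiplicities in each chart -/

lemma mult_vertical {n : ℕ} (hn : 3 ≤ n) : mult (FermatPlus n) vert = n + 1 := by
  have h0 : n ≠ 0 := by omega
  unfold vert
  rw [mult_mkP hn, rootCount_ne hn _ one_ne_zero, rootCount_zero hn, rootCount_zero hn]
  simp [h0]

lemma mult_infinity {n : ℕ} (hn : 3 ≤ n) (t : ℂ) :
    mult (FermatPlus n) (inf t) = if t = 0 then n + 1 else if t ^ n = 1 then 1 else 0 := by
  have h0 : n ≠ 0 := by omega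
  unfold inf
  rw [mult_mkP hn, rootCount_ne hn 0 one_ne_zero, rootCount_zero hn]
  by_cases ht : t = 0
  · subst ht
    rw [rootCount_zero hn]
    simp [h0]
  · rw [rootCount_ne hn _ ht]
    simp [h0, ht, eq_comm]

lemma mult_affine {n : ℕ} (hn : 3 ≤ n) (s t : ℂ) :
    mult (FermatPlus n) (aff s t) =
      if s = 0 then (if t = 0 then n + 2 else if t ^ n = 1 then 2 else 1)
      else if t = 0 then (if s ^ n = 1 then 2 else 1)
      else if s ^ n = 1 ∧ t ^ n = 1 then 3
      else if s ^ n = 1 ∨ t ^ n = 1 ∨ s ^ n = t ^ n then 1 else 0 := by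
  have h0 : n ≠ 0 := by omega
  unfold aff
  rw [mult_mkP hn, rootCount_ne hn t one_ne_zero]
  by_cases hs : s = 0 <;> by_cases ht : t = 0
  · subst hs ht
    simp [h0, rootCount_zero hn]
  · subst hs
    rw [rootCount_zero hn, rootCount_ne hn _ ht]
    have := pow_ne_zero n ht
    simp [h0, ht, this.symm]
    split_ifs <;> rfl
  · subst ht
    rw [rootCount_zero hn, rootCount_ne hn _ hs]
    simp only [one_pow]
    simp [h0, hs, eq_comm]
    split_ifs <;> rfl
  · rw [rootCount_ne hn _ hs, rootCount_ne hn _ ht]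
    simp only [one_pow, hs, ht, if_false]
    grind

/-! ### The points of each multiplicity -/

lemma triple_set {n : ℕ} (hn : 3 ≤ n) :
    {p : P2 | mult (FermatPlus n) p = 3} =
      (((muN n ×ˢ muN n).image fun q => aff q.1 q.2 : Finset P2) : Set P2) := by
  ext p
  simp only [Set.mem_ofPred_eq, Finset.coe_image, Set.mem_image, Finset.mem_coe, Finset.mem_product,
    Prod.exists]
  constructor
  · intro hp
    rcases P2_cases p with ⟨s, t, rfl⟩ | ⟨t, rfl⟩ | rfl
    · rw [mult_affine hn] at hp
      refine ⟨s, t, ?_, rfl⟩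
      rw [mem_muN hn, mem_muN hn]
      grind
    · rw [mult_infinity hn] at hp
      grind
    · rw [mult_vertical hn] at hp
      omega
  · rintro ⟨s, t, ⟨hs, ht⟩, rfl⟩
    have := muN_ne_zero hn hs
    have := muN_ne_zero hn ht
    rw [mem_muN hn] at hs ht
    rw [mult_affine hn]
    simp [*]

lemma double_set {n : ℕ} (hn : 3 ≤ n) :
    {p : P2 | mult (FermatPlus n) p = 2} =
      (((muN n).image (fun t => aff 0 t) ∪ (muN n).image (fun s => aff s 0) : Finset P2)
        : Set P2) := by
  ext p
  simp only [Set.mem_ofPred_eq, Finset.mem_coe, Finset.mem_union, Finset.mem_image]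
  constructor
  · intro hp
    rcases P2_cases p with ⟨s, t, rfl⟩ | ⟨t, rfl⟩ | rfl
    · rw [mult_affine hn] at hp
      simp only [aff_inj, mem_muN hn]
      grind
    · rw [mult_infinity hn] at hp
      grind
    · rw [mult_vertical hn] at hp
      omega
  · rintro (⟨t, ht, rfl⟩ | ⟨t, ht, rfl⟩)
    all_goals
      have := muN_ne_zero hn ht
      rw [mem_muN hn] at ht
      rw [mult_affine hn]
      simp [*]

lemma top_set {n : ℕ} (hn : 3 ≤ n) :
    {p : P2 | mult (FermatPlus n) p = n + 2} = {aff 0 0} := by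
  ext p
  simp only [Set.mem_ofPred_eq, Set.mem_singleton_iff]
  rcases P2_cases p with ⟨s, t, rfl⟩ | ⟨t, rfl⟩ | rfl
  · rw [mult_affine hn, aff_inj]
    grind
  · rw [mult_infinity hn]
    simp only [aff_ne_inf.symm, iff_false]
    grind
  · rw [mult_vertical hn]
    simp [aff_ne_vert.symm]

lemma next_set {n : ℕ} (hn : 3 ≤ n) :
    {p : P2 | mult (FermatPlus n) p = n + 1} = {vert, inf 0} := by
  ext p
  simp only [Set.mem_ofPred_eq, Set.mem_singleton_iff, Set.mem_insert_iff]
  rcases P2_cases p with ⟨s, t, rfl⟩ | ⟨t, rfl⟩ | rfl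
  · rw [mult_affine hn]
    simp only [aff_ne_vert, aff_ne_inf, or_false, iff_false]
    grind
  · rw [mult_infinity hn]
    simp only [inf_ne_vert, inf_inj, false_or]
    grind
  · rw [mult_vertical hn]
    simp

/-- For every `n ≥ 3`, the arrangement of the `3n + 2` lines given by the
linear factors of `x·y·(x^n - y^n)(y^n - z^n)(z^n - x^n)` has exactly one point of multiplicity
`n + 2` (namely `[0:0:1]`), exactly two points of multiplicity `n + 1` (namely `[0:1:0]` and
`[1:0:0]`), exactly `n²` triple points, exactly `2n` double points, and no other singular
points; i.e. `t₂ = 2n`, `t₃ = n²`, `t_{n+1} = 2`, `t_{n+2} = 1`. -/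
theorem stmt_13 (n : ℕ) (hn : 3 ≤ n) :
    tr (FermatPlus n) 2 = 2 * n ∧
    tr (FermatPlus n) 3 = n ^ 2 ∧
    tr (FermatPlus n) (n + 1) = 2 ∧
    tr (FermatPlus n) (n + 2) = 1 ∧
    {p : P2 | mult (FermatPlus n) p = n + 2} = {mkP 0 0 1 (vne₂ one_ne_zero)} ∧
    {p : P2 | mult (FermatPlus n) p = n + 1}
      = {mkP 0 1 0 (vne₁ one_ne_zero), mkP 1 0 0 (vne₀ one_ne_zero)} ∧
    (∀ p : P2, IsSing (FermatPlus n) p →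
      mult (FermatPlus n) p = 2 ∨ mult (FermatPlus n) p = 3 ∨
      mult (FermatPlus n) p = n + 1 ∨ mult (FermatPlus n) p = n + 2) := by
  refine ⟨?_, ?_, ?_, ?_, top_set hn, next_set hn, ?_⟩
  · unfold tr
    rw [double_set hn, Set.ncard_coe_finset, Finset.card_union_of_disjoint,
      Finset.card_image_of_injective, Finset.card_image_of_injective, card_muN hn, two_mul]
    · exact fun s s' h => (aff_inj.1 h).1
    · exact fun t t' h => (aff_inj.1 h).2
    · rw [Finset.disjoint_left]
      simp only [Finset.mem_image]
      rintro _ ⟨t, ht, rfl⟩ ⟨s, hs, h⟩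
      exact muN_ne_zero hn hs (aff_inj.1 h).1
  · unfold tr
    rw [triple_set hn, Set.ncard_coe_finset, Finset.card_image_of_injective, Finset.card_product,
      card_muN hn, sq]
    exact fun q q' h => Prod.ext (aff_inj.1 h).1 (aff_inj.1 h).2
  · unfold tr
    rw [next_set hn, Set.ncard_pair inf_ne_vert.symm]
  · unfold tr
    rw [top_set hn, Set.ncard_singleton]
  · intro p hp
    unfold IsSing at hp
    rcases P2_cases p with ⟨s, t, rfl⟩ | ⟨t, rfl⟩ | rfl
    · rw [mult_affine hn] at hp ⊢
      grind
    · rw [mult_infinity hn] at hp ⊢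
      grind
    · rw [mult_vertical hn]
      omega
end
end
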